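/- Let q = q(n) satisfy 0.98·log(n)/n ≤ q ≤ 1.01·log(n)/n. Then with high probability, every two distinct vertices of the Erdős–Rényi random graph G_{n,q} that both have degree at most (1/10)·log n are at graph distance at least 5 from each other in G_{n,q}. -/

import Mathlib

open MeasureTheory Filter

/-- The Bernoulli measure on `Bool` with success probability `p` (clamped into `[0,1]`;
for `0 ≤ p ≤ 1` this is the genuine Bernoulli measure). -/
noncomputable def bernoulliM (p : ℝ) : Measure Bool :=
  (PMF.bernoulli (min (Real.toNNReal p) 1) (min_le_right _ _)).toMeasure

instance (p : ℝ) : IsProbabilityMeasure (bernoulliM p) := by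
  unfold bernoulliM; infer_instance

/-- The Erdős–Rényi random graph `G_{n,p}`: each unordered pair of vertices of `Fin n`
is independently present with probability `p`. -/
noncomputable def gnp (n : ℕ) (p : ℝ) : Measure (Sym2 (Fin n) → Bool) :=
  Measure.pi fun _ => bernoulliM p

/-- The degree of the vertex `v` in the graph described by `ω`. -/
def degB {n : ℕ} (ω : Sym2 (Fin n) → Bool) (v : Fin n) : ℕ :=
  (Finset.univ.filter fun u => u ≠ v ∧ ω s(u, v) = true).card

/-- The simple graph on `Fin n` described by `ω`. -/
def graphOf {n : ℕ} (ω : Sym2 (Fin n) → Bool) : SimpleGraph (Fin n) where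
  Adj u v := u ≠ v ∧ ω s(u, v) = true
  symm := by
    refine ⟨?_⟩
    intro u v h
    refine ⟨h.1.symm, ?_⟩
    rw [Sym2.eq_swap]
    exact h.2
  loopless := ⟨fun v h => h.1 rfl⟩


set_option linter.deprecated false in
lemma integral_bernoulliM (p : ℝ) (h0 : 0 ≤ p) (h1 : p ≤ 1) (f : Bool → ℝ) :
    ∫ b, f b ∂(bernoulliM p) = p * f true + (1 - p) * f false := by
  have hm : min (Real.toNNReal p) 1 = Real.toNNReal p := by
    apply min_eq_left
    rwa [Real.toNNReal_le_one]
  unfold bernoulliM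
  rw [PMF.integral_eq_sum]
  simp [PMF.bernoulli_apply, hm, ENNReal.toReal_sub_of_le, h0, h1]

/-- Exponential-moment bound: all coordinates in `T` are on and few coordinates of `S` are on. -/
lemma chernoff_aux {ι : Type*} [Fintype ι] [DecidableEq ι] (p : ℝ) (h0 : 0 ≤ p) (h1 : p ≤ 1)
    (T S : Finset ι) (hd : Disjoint T S) (b : ℝ) :
    (Measure.pi fun _ : ι => bernoulliM p).real
      {ω | (∀ e ∈ T, ω e = true) ∧ ((S.filter fun e => ω e = true).card : ℝ) ≤ b}
      ≤ Real.exp (2 * b) * (p ^ T.card * (1 - p * (1 - Real.exp (-2))) ^ S.card) := by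
  set μ := (Measure.pi fun _ : ι => bernoulliM p)
  set A : Set (ι → Bool) :=
    {ω | (∀ e ∈ T, ω e = true) ∧ ((S.filter fun e => ω e = true).card : ℝ) ≤ b}
  let F : ι → Bool → ℝ := fun e c =>
    (if e ∈ T then (if c = true then 1 else 0) else 1) *
      (if e ∈ S then (if c = true then Real.exp (-2) else 1) else 1)
  have hF0 : ∀ e c, 0 ≤ F e c := by
    intro e c
    simp only [F]
    split_ifs <;> positivity
  have hint : ∫ ω, ∏ e, F e (ω e) ∂μ
      = p ^ T.card * (1 - p * (1 - Real.exp (-2))) ^ S.card := by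
    rw [integral_fintype_prod_eq_prod]
    have : ∀ e, ∫ c, F e c ∂(bernoulliM p) =
        (if e ∈ T then p else 1) * (if e ∈ S then (1 - p * (1 - Real.exp (-2))) else 1) := by
      intro e
      rw [integral_bernoulliM p h0 h1]
      by_cases hT : e ∈ T
      · have hS : e ∉ S := Finset.disjoint_left.mp hd hT
        simp [F, hT, hS]
      · by_cases hS : e ∈ S
        · simp [F, hT, hS]; ring
        · simp [F, hT, hS]
    simp_rw [this]
    rw [Finset.prod_mul_distrib]
    simp [Finset.prod_ite_mem, Finset.prod_const]
  have hA : MeasurableSet A := (Set.toFinite A).measurableSet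
  rw [← hint, ← integral_const_mul, ← integral_indicator_one hA]
  apply integral_mono (Integrable.of_finite) (Integrable.of_finite)
  intro ω
  simp only [Set.indicator]
  split_ifs with hω
  · obtain ⟨hT, hS⟩ := hω
    have : ∏ e, F e (ω e) = Real.exp (-2) ^ (S.filter fun e => ω e = true).card := by
      simp only [F]
      rw [Finset.prod_mul_distrib, Finset.prod_eq_one, one_mul]
      · rw [Finset.prod_ite_mem, Finset.univ_inter, Finset.prod_ite]
        simp
      · intro e _
        split_ifs with h1 h2 h3
        · rfl
        · exact absurd (hT e h1) h2
        · rfl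
    simp only [Pi.one_apply, this]
    rw [← Real.exp_nat_mul, ← Real.exp_add]
    apply Real.one_le_exp
    linarith
  · have := Finset.prod_nonneg (s := Finset.univ) (fun e _ => hF0 e (ω e))
    positivity

lemma path_bound {n k : ℕ} (hk : 1 ≤ k) (p : ℝ) (h0 : 0 ≤ p) (h1 : p ≤ 1) (a : ℝ)
    (x : Fin (k + 1) → Fin n) (hx : Function.Injective x) :
    (gnp n p).real
      {ω | (∀ i : Fin k, ω s(x i.castSucc, x i.succ) = true) ∧
        (degB ω (x 0) : ℝ) ≤ a ∧ (degB ω (x (Fin.last k)) : ℝ) ≤ a}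
      ≤ Real.exp (4 * a) * (p ^ k * (1 - p * (1 - Real.exp (-2))) ^ (2 * (n - (k + 1)))) := by
  classical
  let T : Finset (Sym2 (Fin n)) :=
    Finset.univ.image fun i : Fin k => s(x i.castSucc, x i.succ)
  let U : Finset (Fin n) := Finset.univ \ Finset.univ.image x
  let S1 : Finset (Sym2 (Fin n)) := U.image fun u => s(u, x 0)
  let S2 : Finset (Sym2 (Fin n)) := U.image fun u => s(u, x (Fin.last k))
  have hU : ∀ u ∈ U, ∀ i, x i ≠ u := by
    intro u hu i h
    simp [U] at hu
    exact hu i h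
  have hne : x 0 ≠ x (Fin.last k) := by
    intro h
    have := congrArg Fin.val (hx h)
    simp at this
    omega
  have hT : T.card = k := by
    rw [Finset.card_image_of_injective, Finset.card_univ, Fintype.card_fin]
    intro i j hij
    simp only [Sym2.eq_iff, hx.eq_iff, Fin.ext_iff, Fin.val_castSucc, Fin.val_succ] at hij
    apply Fin.ext
    omega
  have hUc : U.card = n - (k + 1) := by
    rw [Finset.card_sdiff_of_subset (Finset.subset_univ _),
      Finset.card_image_of_injective _ hx]
    simp
  have hS1 : S1.card = n - (k + 1) := by
    rw [← hUc]
    apply Finset.card_image_of_injective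
    intro u v huv
    simp only [Sym2.eq_iff] at huv
    grind
  have hS2 : S2.card = n - (k + 1) := by
    rw [← hUc]
    apply Finset.card_image_of_injective
    intro u v huv
    simp only [Sym2.eq_iff] at huv
    grind
  have hS12 : Disjoint S1 S2 := by
    rw [Finset.disjoint_left]
    intro e he1 he2
    obtain ⟨u, hu, rfl⟩ := Finset.mem_image.mp he1
    obtain ⟨v, hv, h⟩ := Finset.mem_image.mp he2
    simp only [Sym2.eq_iff] at h
    have := hU u hu (Fin.last k)
    grind
  have hTS : Disjoint T (S1 ∪ S2) := by
    rw [Finset.disjoint_left]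
    intro e he1 he2
    obtain ⟨i, -, rfl⟩ := Finset.mem_image.mp he1
    rcases Finset.mem_union.mp he2 with h | h <;>
    · obtain ⟨v, hv, h⟩ := Finset.mem_image.mp h
      simp only [Sym2.eq_iff] at h
      have h1 := hU v hv i.castSucc
      have h2 := hU v hv i.succ
      grind
  have key := chernoff_aux p h0 h1 T (S1 ∪ S2) hTS (2 * a)
  rw [hT, Finset.card_union_of_disjoint hS12, hS1, hS2, ← two_mul, ← mul_assoc] at key
  have : IsProbabilityMeasure (gnp n p) := by unfold gnp; infer_instance
  refine le_trans (measureReal_mono ?_ (measure_ne_top _ _)) (key.trans_eq ?_)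
  rotate_left
  · rw [show 2 * (2 * a) = 4 * a by ring]
    ring
  rintro ω ⟨hω, hd0, hd1⟩
  refine ⟨by simpa [T] using hω, ?_⟩
  have hdeg : ∀ j, (((U.image fun u => s(u, x j)).filter fun e => ω e = true).card)
      ≤ degB ω (x j) := by
    intro j
    rw [Finset.filter_image]
    refine Finset.card_image_le.trans (Finset.card_le_card ?_)
    intro u hu
    rw [Finset.mem_filter] at hu
    simp only [Finset.mem_filter, Finset.mem_univ, true_and]
    exact ⟨(hU u hu.1 j).symm, hu.2⟩
  have hc : ((S1 ∪ S2).filter fun e => ω e = true).card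
      ≤ degB ω (x 0) + degB ω (x (Fin.last k)) := by
    rw [Finset.filter_union]
    exact (Finset.card_union_le _ _).trans (add_le_add (hdeg _) (hdeg _))
  have hc' : (((S1 ∪ S2).filter fun e => ω e = true).card : ℝ)
      ≤ degB ω (x 0) + degB ω (x (Fin.last k)) := by exact_mod_cast hc
  linarith

/-- The bad event is covered by the path events. -/
lemma bad_bound (n : ℕ) (p : ℝ) (h0 : 0 ≤ p) (h1 : p ≤ 1) (a : ℝ) :
    (gnp n p).real
      {ω | ∀ v w : Fin n, v ≠ w → (degB ω v : ℝ) ≤ a → (degB ω w : ℝ) ≤ a →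
              ∀ P : (graphOf ω).Walk v w, 5 ≤ P.length}ᶜ
      ≤ ∑ k ∈ Finset.Icc 1 4, (n : ℝ) ^ (k + 1) *
        (Real.exp (4 * a) * (p ^ k * (1 - p * (1 - Real.exp (-2))) ^ (2 * (n - (k + 1))))) := by
  classical
  let E : (k : ℕ) → (Fin (k + 1) → Fin n) → Set (Sym2 (Fin n) → Bool) := fun k x =>
    {ω | (∀ i : Fin k, ω s(x i.castSucc, x i.succ) = true) ∧
        (degB ω (x 0) : ℝ) ≤ a ∧ (degB ω (x (Fin.last k)) : ℝ) ≤ a}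
  have : IsProbabilityMeasure (gnp n p) := by unfold gnp; infer_instance
  have hsub : {ω | ∀ v w : Fin n, v ≠ w → (degB ω v : ℝ) ≤ a → (degB ω w : ℝ) ≤ a →
              ∀ P : (graphOf ω).Walk v w, 5 ≤ P.length}ᶜ ⊆
      ⋃ k ∈ Finset.Icc 1 4, ⋃ x ∈ (Finset.univ.filter fun x : Fin (k + 1) → Fin n =>
        Function.Injective x), E k x := by
    intro ω hω
    simp only [Set.mem_compl_iff, Set.mem_ofPred_eq, not_forall, not_le] at hω
    obtain ⟨v, w, hvw, hv, hw, P, hP⟩ := hω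
    let Q := P.bypass
    have hQ : Q.IsPath := P.bypass_isPath
    have hQl : Q.length ≤ P.length := P.length_bypass_le_length
    have hQ1 : 1 ≤ Q.length := by
      rw [Nat.one_le_iff_ne_zero]
      intro h
      exact hvw (SimpleGraph.Walk.eq_of_length_eq_zero h)
    simp only [Set.mem_iUnion]
    refine ⟨Q.length, Finset.mem_Icc.mpr ⟨hQ1, by omega⟩, fun i => Q.getVert i, ?_, ?_, ?_, ?_⟩
    · simp only [Finset.mem_filter, Finset.mem_univ, true_and]
      intro i j hij
      apply Fin.ext
      exact hQ.getVert_injOn (by simp; omega) (by simp; omega) hij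
    · intro i
      exact (Q.adj_getVert_succ i.2).2
    · simpa using hv
    · simpa using hw
  refine (measureReal_mono hsub (measure_ne_top _ _)).trans ((measureReal_biUnion_finset_le _ _).trans ?_)
  apply Finset.sum_le_sum
  intro k hk
  refine (measureReal_biUnion_finset_le _ _).trans ?_
  have hb : 0 ≤ (Real.exp (4 * a) *
      (p ^ k * (1 - p * (1 - Real.exp (-2))) ^ (2 * (n - (k + 1))))) := by
    have : 0 ≤ 1 - p * (1 - Real.exp (-2)) := by nlinarith [Real.exp_pos (-2)]
    positivity
  refine (Finset.sum_le_card_nsmul _ _ _ fun x hx =>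
    path_bound (Finset.mem_Icc.mp hk).1 p h0 h1 a x (Finset.mem_filter.mp hx).2).trans ?_
  rw [nsmul_eq_mul]
  apply mul_le_mul_of_nonneg_right _ hb
  have := Finset.card_filter_le (Finset.univ : Finset (Fin (k + 1) → Fin n))
    (fun x => Function.Injective x)
  rw [Finset.card_univ, Fintype.card_fun, Fintype.card_fin, Fintype.card_fin] at this
  exact_mod_cast this

lemma exp_neg_two_le : Real.exp (-2) ≤ 0.14 := by
  rw [Real.exp_neg, inv_le_comm₀ (Real.exp_pos _) (by norm_num)]
  have h := Real.exp_one_gt_d9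
  have : Real.exp 2 = Real.exp 1 * Real.exp 1 := by rw [← Real.exp_add]; norm_num
  rw [this]
  nlinarith

/-- Numerical estimate of one term of the union bound. -/
lemma term_bound (n k : ℕ) (p L : ℝ) (hn : 5 ≤ n) (hL : L = Real.log n) (hL1 : 1 ≤ L)
    (h0 : 0.98 * L / n ≤ p) (h1 : p ≤ 1.01 * L / n) (hp : p ≤ 0.1) (hk : k ∈ Finset.Icc 1 4) :
    (n : ℝ) ^ (k + 1) * (Real.exp (4 * (1 / 10 * L)) *
      (p ^ k * (1 - p * (1 - Real.exp (-2))) ^ (2 * (n - (k + 1)))))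
      ≤ Real.exp 1 * 1.01 ^ 4 * (L ^ 4 * Real.exp (-(0.28 * L))) := by
  obtain ⟨hk1, hk4⟩ := Finset.mem_Icc.mp hk
  have hn0 : (0 : ℝ) < n := by positivity
  have hp0 : 0 ≤ p := le_trans (by positivity) h0
  have hE := exp_neg_two_le
  have hE0 := Real.exp_pos (-2)
  have hnL : (n : ℝ) = Real.exp L := by rw [hL, Real.exp_log hn0]
  have hpn1 : p * n ≤ 1.01 * L := by rwa [le_div_iff₀ hn0] at h1
  have hpn0 : 0.98 * L ≤ p * n := by rwa [div_le_iff₀ hn0] at h0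
  have hA : (1 - p * (1 - Real.exp (-2))) ^ (2 * (n - (k + 1))) ≤ Real.exp (1 - 1.68 * L) := by
    have hb0 : 0 ≤ 1 - p * (1 - Real.exp (-2)) := by nlinarith
    have hb1 : 1 - p * (1 - Real.exp (-2)) ≤ Real.exp (-(0.86 * p)) := by
      have := Real.add_one_le_exp (-(0.86 * p))
      nlinarith
    refine (pow_le_pow_left₀ hb0 hb1 _).trans ?_
    rw [← Real.exp_nat_mul]
    apply Real.exp_le_exp.mpr
    have hc : (n : ℝ) - 5 ≤ ((n - (k + 1) : ℕ) : ℝ) := by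
      have : n ≤ (n - (k + 1)) + 5 := by omega
      have : (n : ℝ) ≤ ((n - (k + 1) : ℕ) : ℝ) + 5 := by exact_mod_cast this
      linarith
    rw [Nat.cast_mul]
    have := mul_le_mul_of_nonneg_left hc hp0
    nlinarith
  have hB : (n : ℝ) ^ k * p ^ k ≤ 1.01 ^ 4 * L ^ 4 := by
    rw [← mul_pow, ← mul_pow]
    have : (n : ℝ) * p ≤ 1.01 * L := by linarith
    refine (pow_le_pow_left₀ (by positivity) this _).trans ?_
    exact pow_le_pow_right₀ (by linarith) hk4
  calc (n : ℝ) ^ (k + 1) * (Real.exp (4 * (1 / 10 * L)) *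
      (p ^ k * (1 - p * (1 - Real.exp (-2))) ^ (2 * (n - (k + 1)))))
      = ((n : ℝ) ^ k * p ^ k) * ((Real.exp (4 * (1 / 10 * L)) * n) *
        (1 - p * (1 - Real.exp (-2))) ^ (2 * (n - (k + 1)))) := by ring
    _ ≤ (1.01 ^ 4 * L ^ 4) * ((Real.exp (4 * (1 / 10 * L)) * n) * Real.exp (1 - 1.68 * L)) := by
        have : 0 ≤ 1 - p * (1 - Real.exp (-2)) := by nlinarith
        gcongr
    _ = Real.exp 1 * 1.01 ^ 4 * (L ^ 4 * Real.exp (-(0.28 * L))) := by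
        have : (Real.exp (4 * (1 / 10 * L)) * n) * Real.exp (1 - 1.68 * L)
            = Real.exp 1 * Real.exp (-(0.28 * L)) := by
          rw [hnL, ← Real.exp_add, ← Real.exp_add, ← Real.exp_add]
          congr 1
          ring
        rw [this]
        ring

lemma tendsto_aux : Tendsto (fun L : ℝ => L ^ 4 * Real.exp (-(0.28 * L))) atTop (nhds 0) := by
  have h := Real.tendsto_pow_mul_exp_neg_atTop_nhds_zero 4
  have h2 : Tendsto (fun L : ℝ => 0.28 * L) atTop atTop :=
    tendsto_id.const_mul_atTop (by norm_num)
  have h3 := (h.comp h2).const_mul ((1 / 0.28 : ℝ) ^ 4)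
  rw [mul_zero] at h3
  refine h3.congr fun L => ?_
  simp only [Function.comp]
  rw [← mul_assoc, ← mul_pow]
  norm_num
  ring

/-- If `0.98·log n / n ≤ q = q(n) ≤ 1.01·log n / n`, then whp every two
distinct vertices of `G_{n,q}` of degree at most `(1/10)·log n` are at graph distance at
least `5` (i.e. every walk between them has length at least `5`; in particular this holds
vacuously when there is no path). -/
theorem low_degree_vertices_far_apart_whp (q : ℕ → ℝ)
    (hq : ∀ᶠ n : ℕ in atTop,
      0.98 * Real.log n / n ≤ q n ∧ q n ≤ 1.01 * Real.log n / n) :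
    Tendsto
      (fun n : ℕ =>
        gnp n (q n)
          {ω | ∀ v w : Fin n, v ≠ w →
              (degB ω v : ℝ) ≤ 1 / 10 * Real.log n →
              (degB ω w : ℝ) ≤ 1 / 10 * Real.log n →
              ∀ P : (graphOf ω).Walk v w, 5 ≤ P.length})
      atTop (nhds 1) := by
  have hlog : Tendsto (fun n : ℕ => Real.log n) atTop atTop :=
    Real.tendsto_log_atTop.comp tendsto_natCast_atTop_atTop
  have hB : Tendsto (fun n : ℕ => 4 * (Real.exp 1 * 1.01 ^ 4 *
      (Real.log n ^ 4 * Real.exp (-(0.28 * Real.log n))))) atTop (nhds 0) := by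
    have := ((tendsto_aux.comp hlog).const_mul (Real.exp 1 * 1.01 ^ 4)).const_mul 4
    simpa using this
  have hdiv : Tendsto (fun n : ℕ => 1.01 * Real.log n / n) atTop (nhds 0) := by
    have h := (Real.isLittleO_log_id_atTop.tendsto_div_nhds_zero.comp
      tendsto_natCast_atTop_atTop).const_mul (1.01 : ℝ) (α := ℕ)
    rw [mul_zero] at h
    refine h.congr fun n => ?_
    simp [mul_div_assoc]
  have hlow : Tendsto (fun n : ℕ => ENNReal.ofReal (1 - 4 * (Real.exp 1 * 1.01 ^ 4 *
      (Real.log n ^ 4 * Real.exp (-(0.28 * Real.log n)))))) atTop (nhds 1) := by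
    have := ENNReal.tendsto_ofReal (hB.const_sub 1)
    simpa using this
  have hprob : ∀ n, IsProbabilityMeasure (gnp n (q n)) := by
    intro n; unfold gnp; infer_instance
  refine tendsto_of_tendsto_of_tendsto_of_le_of_le' hlow tendsto_const_nhds ?_
    (Eventually.of_forall fun n => prob_le_one)
  filter_upwards [hq, hlog.eventually_ge_atTop 1, hdiv.eventually_le_const
    (show (0 : ℝ) < 0.1 by norm_num), eventually_ge_atTop 5] with n hqn hL hd hn
  have hq0 : 0 ≤ q n := le_trans (by positivity) hqn.1
  have hq1 : q n ≤ 0.1 := hqn.2.trans hd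
  have hbad := bad_bound n (q n) hq0 (hq1.trans (by norm_num)) (1 / 10 * Real.log n)
  have hsum := Finset.sum_le_card_nsmul (Finset.Icc 1 4) _ _ fun k hk =>
    term_bound n k (q n) (Real.log n) hn rfl hL hqn.1 hqn.2 hq1 hk
  have h4 := hbad.trans hsum
  rw [probReal_compl_eq_one_sub (Set.toFinite _).measurableSet] at h4
  simp only [Nat.card_Icc, nsmul_eq_mul] at h4
  norm_num only at h4
  refine ENNReal.ofReal_le_of_le_toReal ?_
  rw [← measureReal_def]
  norm_num only
  linarith
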